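/- Let d,k ≥ 1 and let t' be the binary tree obtained from a binary tree t by performing a left or right k-rotation at a node v of t. Then ld(t) ~_k^d ld(t') if and only if the left depth of v in t is at least d−1. -/

import Mathlib

/-- Full binary trees (every internal node has exactly two children). -/
inductive BTree : Type
  | leaf : BTree
  | node : BTree → BTree → BTree
deriving DecidableEq

namespace BTree

/-- Number of leaves of a full binary tree. -/
def numLeaves : BTree → ℕ
  | leaf => 1
  | node l r => l.numLeaves + r.numLeaves

/-- The list of pairs (left depth, right depth) of the leaves, in preorder. -/
def leafDepths : BTree → List (ℕ × ℕ)
  | leaf => [(0, 0)]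
  | node l r =>
      (l.leafDepths.map fun p => (p.1 + 1, p.2)) ++ (r.leafDepths.map fun p => (p.1, p.2 + 1))

/-- The left depth sequence `ld(t)` of the leaves of `t`, in preorder. -/
def ld (t : BTree) : List ℕ := t.leafDepths.map Prod.fst

/-- The right depth sequence `rd(t)` of the leaves of `t`, in preorder. -/
def rd (t : BTree) : List ℕ := t.leafDepths.map Prod.snd

end BTree

/-- `b ~^d c` : the sequences have equal length and agree at every position where
either entry is `< d`. -/
def DepthEq (d : ℕ) : List ℕ → List ℕ → Prop :=
  List.Forall₂ (fun a b => min a b < d → a = b)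

/-- `b ~_k c` : entrywise congruence mod `k` (and equal length). -/
def ModListEq (k : ℕ) : List ℕ → List ℕ → Prop :=
  List.Forall₂ (fun a b => a % k = b % k)

/-- The relation `t ~ t'` iff `ld(t) ~^d ld(t')` and `rd(t) ~^e rd(t')`. -/
def DeRel (d e : ℕ) (t t' : BTree) : Prop :=
  DepthEq d t.ld t'.ld ∧ DepthEq e t.rd t'.rd

/-- The relation `t ~ t'` iff `ld(t) ~_k^d ld(t')` (i.e. `ld(t) ~_k ld(t')` and
`ld(t) ~^d ld(t')`). -/
def DkRel (d k : ℕ) (t t' : BTree) : Prop :=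
  ModListEq k t.ld t'.ld ∧ DepthEq d t.ld t'.ld

/-- `T_n`: full binary trees with `n+1` leaves. -/
def Tn (n : ℕ) : Type := {t : BTree // t.numLeaves = n + 1}

/-- `C^{d,e}_n`: the number of equivalence classes of the relation `DeRel d e` on `T_n`. -/
noncomputable def Cde (d e n : ℕ) : ℕ :=
  Nat.card (Quot (fun t t' : Tn n => DeRel d e t.1 t'.1))

/-- `C^d_{k,n}`: the number of equivalence classes of `ld(t) ~_k^d ld(t')` on `T_n`. -/
noncomputable def Cdk (d k n : ℕ) : ℕ :=
  Nat.card (Quot (fun t t' : Tn n => DkRel d k t.1 t'.1))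

/-- Directions to a left or right child. -/
inductive Dir : Type
  | L : Dir
  | R : Dir
deriving DecidableEq

/-- The maximal subtree rooted at the node at position `p` (if such a node exists). -/
def subtreeAt : BTree → List Dir → Option BTree
  | t, [] => some t
  | BTree.leaf, _ :: _ => none
  | BTree.node l _, Dir.L :: p => subtreeAt l p
  | BTree.node _ r, Dir.R :: p => subtreeAt r p

/-- Replace the maximal subtree rooted at position `p` by `s` (if the position exists). -/
def replaceAt : BTree → List Dir → BTree → Option BTree
  | _, [], s => some s
  | BTree.leaf, _ :: _, _ => none
  | BTree.node l r, Dir.L :: p, s => (replaceAt l p s).map fun l' => BTree.node l' r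
  | BTree.node l r, Dir.R :: p, s => (replaceAt r p s).map fun r' => BTree.node l r'

/-- `leftAssoc t₀ [t₁,…,t_m] = t₀ ∧ t₁ ∧ ⋯ ∧ t_m` with `∧` performed left to right. -/
def leftAssoc : BTree → List BTree → BTree := List.foldl BTree.node

/-- `t'` is obtained from `t` by a right `k`-rotation at the node at position `p`:
the maximal subtree `t₀ ∧ t₁ ∧ ⋯ ∧ t_{k+1}` rooted there (with `∧` performed left to
right) is replaced by `t₀ ∧ (t₁ ∧ ⋯ ∧ t_{k+1})`.  The left depth of that node is
`p.count Dir.L`. -/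
def IsRightKRot (k : ℕ) (p : List Dir) (t t' : BTree) : Prop :=
  ∃ (t₀ t₁ : BTree) (rest : List BTree), rest.length = k ∧
    subtreeAt t p = some (leftAssoc t₀ (t₁ :: rest)) ∧
    replaceAt t p (BTree.node t₀ (leftAssoc t₁ rest)) = some t'

/-- `IsTopOf s u`: `s` is a subtree of `u` rooted at the root of `u`. -/
def IsTopOf : BTree → BTree → Prop
  | BTree.leaf, _ => True
  | BTree.node l r, BTree.node l' r' => IsTopOf l l' ∧ IsTopOf r r'
  | BTree.node _ _, BTree.leaf => False

/-- `t` contains `s` at left depth `δ`: `t` has a subtree equal to `s` rooted at a node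
of left depth `δ`. -/
def ContainsAt (t s : BTree) (δ : ℕ) : Prop :=
  ∃ (p : List Dir) (u : BTree), subtreeAt t p = some u ∧ p.count Dir.L = δ ∧ IsTopOf s u

/-- `t` avoids `s` at left depth `δ`. -/
def AvoidsAt (t s : BTree) (δ : ℕ) : Prop := ¬ ContainsAt t s δ

/-- `comb_k`: the left-to-right `∧`-product of `k+1` single leaves. -/
def comb (k : ℕ) : BTree := leftAssoc BTree.leaf (List.replicate k BTree.leaf)

/-- `comb_k^1 := t₀ ∧ comb_k` with `t₀` a single leaf. -/
def comb1 (k : ℕ) : BTree := BTree.node BTree.leaf (comb k)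

/-- One left `k`-rotation step, at a node of left depth at least `d-1`, from `t` to `t'`. -/
def LeftRotStep (d k : ℕ) (t t' : BTree) : Prop :=
  ∃ p : List Dir, d - 1 ≤ p.count Dir.L ∧ IsRightKRot k p t' t

/-- The `(d;k)`-order: `s ≤ t` iff `s` is obtained from `t` by finitely many left
`k`-rotations at nodes of left depth at least `d-1`. -/
def dkLE (d k : ℕ) (s t : BTree) : Prop := Relation.ReflTransGen (LeftRotStep d k) t s

/-- `t` is `(d;k)`-minimal. -/
def dkMinimal (d k : ℕ) (t : BTree) : Prop := ∀ s, dkLE d k s t → s = t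

/-- `t` is `(d;k)`-maximal. -/
def dkMaximal (d k : ℕ) (t : BTree) : Prop := ∀ s, dkLE d k t s → s = t

/-!
A right `k`-rotation replaces `t₀ ∧ t₁ ∧ ⋯ ∧ t_{k+1}` by `t₀ ∧ (t₁ ∧ ⋯ ∧ t_{k+1})`. It lowers the
left depth of every leaf of `t₀` by exactly `k`, so congruence mod `k` always persists, and it fixes
the left depth of every other leaf. If the rotated node has left depth `δ`, the new left depths of
the leaves of `t₀` are at least `δ + 1`, with equality for the last leaf of `t₀`; hence no entry
below `d` changes if and only if `d ≤ δ + 1`.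
-/

theorem forall₂_append_left_iff {α : Type*} {R : α → α → Prop} (hR : ∀ a, R a a)
    (l : List α) {l₁ l₂ : List α} :
    List.Forall₂ R (l ++ l₁) (l ++ l₂) ↔ List.Forall₂ R l₁ l₂ := by
  induction l with
  | nil => rfl
  | cons a l ih => simp only [List.cons_append, List.forall₂_cons, hR, ih, true_and]

theorem forall₂_append_right_iff {α : Type*} {R : α → α → Prop} (hR : ∀ a, R a a)
    {l₁ l₂ : List α} (l : List α) :
    List.Forall₂ R (l₁ ++ l) (l₂ ++ l) ↔ List.Forall₂ R l₁ l₂ := by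
  refine ⟨fun h => ?_, fun h => List.rel_append h (List.forall₂_same.2 fun a _ => hR a)⟩
  have hlen : l₁.length = l₂.length := by
    simpa only [List.length_append, Nat.add_right_cancel_iff] using h.length_eq
  simpa only [List.take_left, hlen, List.take_left'] using List.forall₂_take l₁.length h

theorem forall₂_map_map_iff {α β γ : Type*} {R : β → γ → Prop} {f : α → β} {g : α → γ}
    {l : List α} :
    List.Forall₂ R (l.map f) (l.map g) ↔ ∀ x ∈ l, R (f x) (g x) := by
  rw [List.forall₂_map_left_iff, List.forall₂_map_right_iff, List.forall₂_same]

theorem ModListEq.symm {k : ℕ} {b c : List ℕ} (h : ModListEq k b c) : ModListEq k c b :=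
  List.Forall₂.flip (h.imp fun _ _ => Eq.symm)

theorem DepthEq.symm {d : ℕ} {b c : List ℕ} (h : DepthEq d b c) : DepthEq d c b :=
  List.Forall₂.flip (h.imp fun a b hab hlt => (hab (min_comm b a ▸ hlt)).symm)

theorem DkRel.symm {d k : ℕ} {t t' : BTree} (h : DkRel d k t t') : DkRel d k t' t :=
  ⟨h.1.symm, h.2.symm⟩

namespace BTree

theorem ld_node (l r : BTree) : (node l r).ld = l.ld.map (· + 1) ++ r.ld := by
  simp [ld, leafDepths, Function.comp_def]

theorem zero_mem_ld (t : BTree) : 0 ∈ t.ld := by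
  induction t with
  | leaf => exact List.mem_singleton_self 0
  | node l r _ ihr => exact ld_node l r ▸ List.mem_append_right _ ihr

end BTree

theorem ld_leftAssoc_cons (t₀ t₁ : BTree) (ts : List BTree) :
    (leftAssoc t₀ (t₁ :: ts)).ld =
      t₀.ld.map (· + (ts.length + 1)) ++ (leftAssoc t₁ ts).ld := by
  induction ts using List.reverseRecOn with
  | nil => exact BTree.ld_node t₀ t₁
  | append_singleton ts u ih =>
    have leftAssoc_concat (s : BTree) (ss : List BTree) :
        leftAssoc s (ss ++ [u]) = BTree.node (leftAssoc s ss) u := List.foldl_concat ..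
    rw [← List.cons_append, leftAssoc_concat, leftAssoc_concat, BTree.ld_node, BTree.ld_node, ih]
    simp [Function.comp_def, Nat.add_assoc]

theorem forall₂_ld_iff_of_replaceAt {R : ℕ → ℕ → Prop} (hR : ∀ a, R a a) {p : List Dir}
    {t t' u s : BTree} (hu : subtreeAt t p = some u) (hs : replaceAt t p s = some t') :
    List.Forall₂ R t.ld t'.ld ↔
      List.Forall₂ (fun a b => R (a + p.count Dir.L) (b + p.count Dir.L)) u.ld s.ld := by
  induction t, p, s using replaceAt.induct generalizing R t' with
  | case1 t s =>
    obtain rfl : t = u := by simpa [subtreeAt] using hu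
    obtain rfl : s = t' := by simpa [replaceAt] using hs
    rfl
  | case2 => simp [subtreeAt] at hu
  | case3 l r p s ih =>
    obtain ⟨l', hl', rfl⟩ := Option.map_eq_some_iff.1 hs
    rw [BTree.ld_node, BTree.ld_node, forall₂_append_right_iff hR, List.forall₂_map_left_iff,
      List.forall₂_map_right_iff, ih (fun a => hR (a + 1)) hu hl', List.count_cons_self]
    rfl
  | case4 l r p s ih =>
    obtain ⟨r', hr', rfl⟩ := Option.map_eq_some_iff.1 hs
    rw [BTree.ld_node, BTree.ld_node, forall₂_append_left_iff hR, ih hR hu hr',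
      List.count_cons_of_ne (by decide)]

namespace IsRightKRot

variable {d k : ℕ} {p : List Dir} {t t' : BTree}

theorem exists_forall₂_ld_iff (h : IsRightKRot k p t t') :
    ∃ t₀ : BTree, ∀ R : ℕ → ℕ → Prop, (∀ a, R a a) → (List.Forall₂ R t.ld t'.ld ↔
      ∀ x ∈ t₀.ld, R (x + (k + 1) + p.count Dir.L) (x + 1 + p.count Dir.L)) := by
  obtain ⟨t₀, t₁, ts, rfl, hsub, hrepl⟩ := h
  refine ⟨t₀, fun R hR => ?_⟩
  have hR_shift (a : ℕ) : R (a + p.count Dir.L) (a + p.count Dir.L) := hR _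
  rw [forall₂_ld_iff_of_replaceAt hR hsub hrepl, ld_leftAssoc_cons, BTree.ld_node,
    forall₂_append_right_iff (R := fun a b => R (a + _) (b + _)) hR_shift, forall₂_map_map_iff]

theorem modListEq (h : IsRightKRot k p t t') : ModListEq k t.ld t'.ld := by
  obtain ⟨t₀, ht₀⟩ := h.exists_forall₂_ld_iff
  refine (ht₀ (· ≡ · [MOD k]) Nat.ModEq.refl).2 fun x _ => ?_
  rw [show x + (k + 1) + p.count Dir.L = x + 1 + p.count Dir.L + k by ring]
  exact Nat.add_modEq_right

theorem depthEq_iff (hk : 1 ≤ k) (h : IsRightKRot k p t t') :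
    DepthEq d t.ld t'.ld ↔ d - 1 ≤ p.count Dir.L := by
  obtain ⟨t₀, ht₀⟩ := h.exists_forall₂_ld_iff
  refine (ht₀ _ fun _ _ => rfl).trans ⟨fun hagree => ?_, fun hdepth x _ hlt => ?_⟩
  · by_contra! hshallow
    have hlast : 0 + (k + 1) + p.count Dir.L = 0 + 1 + p.count Dir.L :=
      hagree 0 t₀.zero_mem_ld (min_lt_of_right_lt (by omega))
    omega
  · have hdeep : d ≤ min (x + (k + 1) + p.count Dir.L) (x + 1 + p.count Dir.L) :=
      le_min (by omega) (by omega)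
    exact absurd hlt hdeep.not_gt

theorem dkRel_iff (hk : 1 ≤ k) (h : IsRightKRot k p t t') :
    DkRel d k t t' ↔ d - 1 ≤ p.count Dir.L :=
  (and_iff_right h.modListEq).trans (h.depthEq_iff hk)

end IsRightKRot

/-- let `d,k ≥ 1` and let `t'` be obtained from `t` by a left or right
`k`-rotation at the node at position `p` (whose left depth is `p.count Dir.L`).  Then
`ld(t) ~_k^d ld(t')` iff the left depth of that node is at least `d-1`. -/
theorem stmt9 (d k : ℕ) (hd : 1 ≤ d) (hk : 1 ≤ k) (t t' : BTree) (p : List Dir)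
    (h : IsRightKRot k p t t' ∨ IsRightKRot k p t' t) :
    (ModListEq k t.ld t'.ld ∧ DepthEq d t.ld t'.ld) ↔ d - 1 ≤ p.count Dir.L := by
  rcases h with h | h
  · exact h.dkRel_iff hk
  · calc DkRel d k t t'
      _ ↔ DkRel d k t' t := ⟨DkRel.symm, DkRel.symm⟩
      _ ↔ d - 1 ≤ p.count Dir.L := h.dkRel_iff hk
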